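/- Consider a Fragile CPR game with strictly decreasing rate of return r. Then the utilization map x_NE : [0, t̄] → [0,1], t ↦ x^t_NE, is continuous on the entire closed interval [0, t̄], where x_NE(t̄) = 0. -/

import Mathlib

open Real Set

noncomputable section

/-- Effective rate of return of a player with sensitivity `α` and loss aversion `k`,
at utilization `x` and tax rate `t`. -/
def effRate (p r : ℝ → ℝ) (α k x t : ℝ) : ℝ :=
  if 0 ≤ r x - t then
    (r x - t) ^ α * (1 - p x) - k * (1 + t) ^ α * p x
  else
    -(k * ((t - r x) ^ α * (1 - p x) + (1 + t) ^ α * p x))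

/-- Partial derivative of the effective rate of return in the utilization. -/
def effRateDx (p r : ℝ → ℝ) (α k x t : ℝ) : ℝ :=
  deriv (fun z => effRate p r α k z t) x

/-- `g_i(x,t) = α_i f_i(x,t) / (−f_{i,x}(x,t))`. -/
def gFun (p r : ℝ → ℝ) (α k x t : ℝ) : ℝ :=
  α * effRate p r α k x t / (-effRateDx p r α k x t)

/-- Standing assumptions on the failure probability `p`. -/
structure FailureProb (p : ℝ → ℝ) : Prop where
  convexOn : ConvexOn ℝ (Ico (0:ℝ) 1) p
  strictMonoOn : StrictMonoOn p (Ico (0:ℝ) 1)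
  contDiffOn : ContDiffOn ℝ 1 p (Ico (0:ℝ) 1)
  eq_one : ∀ x : ℝ, 1 ≤ x → p x = 1
  mem_unit : ∀ x : ℝ, p x ∈ Icc (0:ℝ) 1

/-- Standing assumptions on the rate of return `r`. -/
structure RateOfReturn (r : ℝ → ℝ) : Prop where
  concaveOn : ConcaveOn ℝ (Icc (0:ℝ) 1) r
  pos : ∀ x ∈ Icc (0:ℝ) 1, 0 < r x
  strictMonoOrAnti : StrictMonoOn r (Icc (0:ℝ) 1) ∨ StrictAntiOn r (Icc (0:ℝ) 1)
  contDiffOn : ContDiffOn ℝ 1 r (Icc (0:ℝ) 1)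

/-- `S_t`: the set of utilizations `x ∈ [0,1]` with `r(x) − t ≥ 0`. -/
def St (r : ℝ → ℝ) (t : ℝ) : Set ℝ := {x | x ∈ Icc (0:ℝ) 1 ∧ 0 ≤ r x - t}

/-- The maximal tax rate `t̄` of the game. -/
def tbar {ι : Type*} [Fintype ι] (p r : ℝ → ℝ) (α k : ι → ℝ) : ℝ :=
  sSup {t : ℝ | 0 ≤ t ∧ ∃ i : ι, ∃ x ∈ Icc (0:ℝ) 1, 0 < effRate p r (α i) (k i) x t}

/-- The maximal tax rate `t̄_i` of a single player. -/
def tbarI (p r : ℝ → ℝ) (α k : ℝ) : ℝ :=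
  sSup {t : ℝ | 0 ≤ t ∧ ∃ x ∈ St r t, 0 < effRate p r α k x t}

/-- `a_t` for a strictly increasing rate of return. -/
def aT (r : ℝ → ℝ) (t : ℝ) : ℝ :=
  if t ≤ r 0 then 0 else sInf {x | x ∈ Icc (0:ℝ) 1 ∧ r x = t}

/-- The threshold `y^t_i` for a strictly decreasing rate of return. -/
def yT (p r : ℝ → ℝ) (α k t : ℝ) : ℝ :=
  if effRate p r α k 0 t ≤ 0 then 0
  else sInf {x | x ∈ St r t ∧ effRate p r α k x t = 0}

/-- `ĝ_i(x,t)`, for a strictly decreasing rate of return. -/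
def gHat (p r : ℝ → ℝ) (α k x t : ℝ) : ℝ :=
  if x < yT p r α k t then gFun p r α k x t else 0

/-- The function `q_i(x,t)` for strictly increasing rate of return. -/
def qFun (p r : ℝ → ℝ) (α x t : ℝ) : ℝ :=
  deriv r x * (1 - p x) ^ 2 /
      ((r x + 1) * deriv p x - α * deriv r x * (1 - p x) * p x) *
    ((1 + t) / (r x - t)) ^ (1 - α)

/-- `b` is a best response of a player (parameters `α`, `k`) to the others' total
investment `xbar` at tax rate `t`. -/
def IsBestResponse (p r : ℝ → ℝ) (α k t xbar b : ℝ) : Prop :=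
  b ∈ Icc (0:ℝ) 1 ∧
    ∀ y ∈ Icc (0:ℝ) 1,
      y ^ α * effRate p r α k (y + xbar) t ≤ b ^ α * effRate p r α k (b + xbar) t

/-- Pure Nash equilibrium of the Fragile CPR game at tax rate `t`. -/
def IsPNE {ι : Type*} [Fintype ι] [DecidableEq ι] (p r : ℝ → ℝ) (α k : ι → ℝ)
    (t : ℝ) (x : ι → ℝ) : Prop :=
  (∀ i, x i ∈ Icc (0:ℝ) 1) ∧
    ∀ i, ∀ y ∈ Icc (0:ℝ) 1,
      y ^ α i * effRate p r (α i) (k i) (y + ∑ j ∈ Finset.univ.erase i, x j) t ≤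
        x i ^ α i * effRate p r (α i) (k i) (x i + ∑ j ∈ Finset.univ.erase i, x j) t

/-- `y` is the threshold `y^t_i` of a player, as defined in the paper for the
increasing and decreasing cases of the rate of return. -/
def IsThresholdY (p r : ℝ → ℝ) (α k t y : ℝ) : Prop :=
  (StrictMonoOn r (Icc (0:ℝ) 1) →
    ((∀ x ∈ St r t, effRate p r α k x t ≤ 0) → y = 0) ∧
    ((∃ x ∈ St r t, 0 < effRate p r α k x t) →
      ∃ z ∈ St r t, IsMaxOn (fun x => effRate p r α k x t) (St r t) z ∧
        y ∈ Ioo z 1 ∧ effRate p r α k y t = 0)) ∧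
  (StrictAntiOn r (Icc (0:ℝ) 1) →
    ((effRate p r α k 0 t ≤ 0) → y = 0) ∧
    ((0 < effRate p r α k 0 t) → y ∈ St r t ∧ effRate p r α k y t = 0))

/-- Pure Nash equilibrium under player-specific tax sensitivities `γ_i`
(all players have `α = 1` and common loss aversion `k`). -/
def IsPNEgamma {ι : Type*} [Fintype ι] [DecidableEq ι] (p r : ℝ → ℝ) (k t : ℝ)
    (γ : ι → ℝ) (x : ι → ℝ) : Prop :=
  (∀ i, x i ∈ Icc (0:ℝ) 1) ∧
    ∀ i, ∀ y ∈ Icc (0:ℝ) 1,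
      y * effRate p r 1 k (y + ∑ j ∈ Finset.univ.erase i, x j) (γ i * t) ≤
        x i * effRate p r 1 k (x i + ∑ j ∈ Finset.univ.erase i, x j) (γ i * t)

/-!
Fix a player and write `u = (r - t)^α`, `v = 1 - p`, `c = k (1 + t)^α`. Where `t ≤ r x` and `x < 1`,
the effective rate of return is `f = (u + c) v - c = v (u + c - c / v)`, a product of two concave
functions. Hence `f` is log-concave where it is positive, and `-f / ∂ₓf` decreases there with the
utilization.

At an equilibrium with total `S` a player invests exactly when `f(S) > 0`, and the first-order
condition then prescribes the investment `α f(S) / (-∂ₓf(S))`. Extended by zero, this share is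
antitone in the utilization and continuous in the tax rate; at the delicate tax rate `t = r x` it
vanishes locally, because `f = -c p < 0` there. So `S` is the point where an antitone function that
varies continuously with the tax rate crosses the diagonal, and such a point moves continuously. The
failure probability may jump at `1`, since only utilizations strictly between `0` and `1` are
compared.

At `t̄` no player has a positive rate of return, since positivity would persist at slightly larger
tax rates; so nobody invests.
-/

open Filter Topology

/-! ### Concavity and crossing points -/

section Concave

variable {E : Type*} [AddCommGroup E] [Module ℝ E] {s : Set E}

lemma concaveOn_comp_of_mapsTo {T : Set ℝ} {g : ℝ → ℝ} {f : E → ℝ} (hg : ConcaveOn ℝ T g)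
    (hg_mono : MonotoneOn g T) (hf : ConcaveOn ℝ s f) (hfT : MapsTo f s T) :
    ConcaveOn ℝ s fun x => g (f x) := by
  refine ⟨hf.1, fun x hx y hy a b ha hb hab => ?_⟩
  exact (hg.2 (hfT hx) (hfT hy) ha hb hab).trans
    (hg_mono (hg.1 (hfT hx) (hfT hy) ha hb hab) (hfT (hf.1 hx hy ha hb hab))
      (hf.2 hx hy ha hb hab))

lemma concaveOn_log_mul {g h : E → ℝ} (hg : ConcaveOn ℝ s g) (hh : ConcaveOn ℝ s h)
    (hg_pos : ∀ x ∈ s, 0 < g x) (hh_pos : ∀ x ∈ s, 0 < h x) :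
    ConcaveOn ℝ s fun x => log (g x * h x) := by
  have hlog : ConcaveOn ℝ (Ioi 0) log := strictConcaveOn_log_Ioi.concaveOn
  have hlog_mono : MonotoneOn log (Ioi 0) := strictMonoOn_log.monotoneOn
  refine ((concaveOn_comp_of_mapsTo hlog hlog_mono hg hg_pos).add
    (concaveOn_comp_of_mapsTo hlog hlog_mono hh hh_pos)).congr fun x hx => ?_
  exact (log_mul (hg_pos x hx).ne' (hh_pos x hx).ne').symm

lemma concaveOn_add_sub_div {u v : E → ℝ} {c : ℝ} (hu : ConcaveOn ℝ s u) (hv : ConcaveOn ℝ s v)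
    (hv_pos : ∀ x ∈ s, 0 < v x) (hc : 0 ≤ c) : ConcaveOn ℝ s fun x => u x + c - c / v x := by
  have hinv : ConcaveOn ℝ (Ioi 0) fun y : ℝ => -y⁻¹ :=
    (convexOn_zpow (-1)).neg.congr fun y _ => congrArg Neg.neg (zpow_neg_one y)
  have hinv_mono : MonotoneOn (fun y : ℝ => -y⁻¹) (Ioi 0) := fun _ ha _ _ hab =>
    neg_le_neg (inv_anti₀ ha hab)
  refine ((hu.add_const c).add
    ((concaveOn_comp_of_mapsTo hinv hinv_mono hv hv_pos).smul hc)).congr fun x _ => ?_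
  simp only [Pi.add_apply, smul_eq_mul, mul_neg, ← sub_eq_add_neg, div_eq_mul_inv]

end Concave

lemma continuousOn_of_crossing {β γ : Type*} [TopologicalSpace β] [TopologicalSpace γ]
    [LinearOrder γ] [OrderTopology γ] [DenselyOrdered γ] {T : Set β} {X : β → γ} {F : β → γ → γ}
    {a b : γ} (hX : MapsTo X T (Ico a b))
    (hF : ∀ y ∈ Ioo a b, ContinuousOn (fun s => F s y) T)
    (hbelow : ∀ s ∈ T, ∀ y ∈ Ioo a b, y ≤ X s → X s ≤ F s y)
    (habove : ∀ s ∈ T, ∀ y ∈ Ioo a b, X s ≤ y → F s y ≤ X s) : ContinuousOn X T := by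
  refine fun t ht => tendsto_order.2 ⟨fun l hl => ?_, fun l hl => ?_⟩
  · rcases lt_or_ge l a with hla | hal
    · filter_upwards [self_mem_nhdsWithin] with s hs using hla.trans_le (hX hs).1
    obtain ⟨y, hly, hyX⟩ := exists_between hl
    have hy : y ∈ Ioo a b := ⟨hal.trans_lt hly, hyX.trans (hX ht).2⟩
    have hyF : y < F t y := hyX.trans_le (hbelow t ht y hy hyX.le)
    filter_upwards [self_mem_nhdsWithin, (hF y hy t ht).eventually_const_lt hyF] with s hs hyFs
    refine hly.trans (lt_of_not_ge fun hXy => hyFs.not_ge ?_)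
    exact (habove s hs y hy hXy).trans hXy
  · obtain ⟨y, hXy, hy_lt⟩ := exists_between (lt_min hl (hX ht).2)
    have hy : y ∈ Ioo a b := ⟨(hX ht).1.trans_lt hXy, hy_lt.trans_le (min_le_right _ _)⟩
    have hFy : F t y < y := (habove t ht y hy hXy.le).trans_lt hXy
    filter_upwards [self_mem_nhdsWithin, (hF y hy t ht).eventually_lt_const hFy] with s hs hFsy
    refine (lt_of_not_ge fun hyX => hFsy.not_ge ?_).trans (hy_lt.trans_le (min_le_left _ _))
    exact hyX.trans (hbelow s hs y hy hyX)

lemma mul_neg_deriv_eq_of_isLocalMax_rpow_mul {g : ℝ → ℝ} {g' a α : ℝ} (ha : 0 < a)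
    (hg : HasDerivAt g g' a) (hmax : IsLocalMax (fun y => y ^ α * g y) a) :
    a * -g' = α * g a := by
  have hzero : α * a ^ (α - 1) * g a + a ^ α * g' = 0 :=
    hmax.hasDerivAt_eq_zero ((hasDerivAt_rpow_const (Or.inl ha.ne')).mul hg)
  have hpow : a ^ α = a ^ (α - 1) * a := by
    rw [rpow_sub_one ha.ne', div_mul_cancel₀ _ ha.ne']
  have hfactor : a ^ (α - 1) * (α * g a + a * g') = 0 := by
    rw [← hzero, hpow]
    ring
  have := (mul_eq_zero.1 hfactor).resolve_left (rpow_pos_of_pos ha _).ne'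
  linarith

/-! ### The failure probability -/

namespace FailureProb

variable {p : ℝ → ℝ} {x : ℝ}

lemma pos (hp : FailureProb p) (hx : 0 < x) : 0 < p x := by
  rcases lt_or_ge x 1 with hx1 | hx1
  · exact (hp.mem_unit 0).1.trans_lt (hp.strictMonoOn ⟨le_rfl, one_pos⟩ ⟨hx.le, hx1⟩ hx)
  · exact (hp.eq_one x hx1).symm ▸ one_pos

lemma lt_one (hp : FailureProb p) (hx : x ∈ Ico (0 : ℝ) 1) : p x < 1 := by
  obtain ⟨y, hxy, hy⟩ := exists_between hx.2
  exact (hp.strictMonoOn hx ⟨hx.1.trans hxy.le, hy⟩ hxy).trans_le (hp.mem_unit y).2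

lemma differentiableAt (hp : FailureProb p) (hx : x ∈ Ioo (0 : ℝ) 1) : DifferentiableAt ℝ p x :=
  (hp.contDiffOn.differentiableOn one_ne_zero).differentiableAt (Ico_mem_nhds hx.1 hx.2)

lemma deriv_pos (hp : FailureProb p) (hx : x ∈ Ioo (0 : ℝ) 1) : 0 < deriv p x := by
  have h0 : (0 : ℝ) ∈ Ico (0 : ℝ) 1 := ⟨le_rfl, one_pos⟩
  have hx' : x ∈ Ico (0 : ℝ) 1 := Ioo_subset_Ico_self hx
  have hslope : 0 < slope p 0 x := by
    rw [slope_def_field]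
    exact div_pos (sub_pos.2 (hp.strictMonoOn h0 hx' hx.1)) (sub_pos.2 hx.1)
  exact hslope.trans_le (hp.convexOn.slope_le_deriv h0 hx' hx.1 (hp.differentiableAt hx))

end FailureProb

/-! ### The effective rate of return -/

section EffRate

variable {p r : ℝ → ℝ} {α k x t : ℝ}

lemma effRate_of_le (h : t ≤ r x) :
    effRate p r α k x t = (r x - t) ^ α * (1 - p x) - k * (1 + t) ^ α * p x :=
  if_pos (sub_nonneg.2 h)

lemma effRate_eq_posPart (hα : α ≠ 0) :
    effRate p r α k x t = (max (r x - t) 0 ^ α - k * max (t - r x) 0 ^ α) * (1 - p x)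
      - k * (1 + t) ^ α * p x := by
  unfold effRate
  split_ifs with h
  · rw [max_eq_left h, max_eq_right (by linarith), zero_rpow hα]
    ring
  · rw [max_eq_right (not_le.1 h).le, max_eq_left (by linarith), zero_rpow hα]
    ring

lemma continuous_effRate_tax (hα : 0 < α) : Continuous fun s => effRate p r α k x s := by
  have hpow : Continuous fun y : ℝ => y ^ α := continuous_rpow_const hα.le
  have hgain : Continuous fun s => max (r x - s) 0 ^ α := hpow.comp (by fun_prop)
  have hloss : Continuous fun s => max (s - r x) 0 ^ α := hpow.comp (by fun_prop)
  have hfail : Continuous fun s : ℝ => (1 + s) ^ α := hpow.comp (by fun_prop)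
  simp only [effRate_eq_posPart hα.ne']
  exact ((hgain.sub (hloss.const_mul k)).mul_const _).sub ((hfail.const_mul k).mul_const _)

lemma continuousOn_effRate (hp : FailureProb p) (hr : ContinuousOn r (Icc (0 : ℝ) 1))
    (hα : 0 < α) : ContinuousOn (fun z => effRate p r α k z t) (Ico (0 : ℝ) 1) := by
  have hp_cont : ContinuousOn p (Ico 0 1) := hp.contDiffOn.continuousOn
  have hr_cont : ContinuousOn r (Ico 0 1) := hr.mono Ico_subset_Icc_self
  have hpow : Continuous fun y : ℝ => y ^ α := continuous_rpow_const hα.le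
  have hgain : ContinuousOn (fun z => max (r z - t) 0 ^ α) (Ico 0 1) :=
    hpow.comp_continuousOn (by fun_prop)
  have hloss : ContinuousOn (fun z => max (t - r z) 0 ^ α) (Ico 0 1) :=
    hpow.comp_continuousOn (by fun_prop)
  simp only [effRate_eq_posPart hα.ne']
  exact ((hgain.sub (hloss.const_mul k)).mul (continuousOn_const.sub hp_cont)).sub
    (hp_cont.const_mul _)

lemma effRate_of_ge (hα : α ≠ 0) (h : r x ≤ t) :
    effRate p r α k x t = -(k * ((t - r x) ^ α * (1 - p x) + (1 + t) ^ α * p x)) := by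
  rw [effRate_eq_posPart hα, max_eq_right (sub_nonpos.2 h), max_eq_left (sub_nonneg.2 h),
    zero_rpow hα]
  ring

lemma lt_rate_of_effRate_pos (hp : FailureProb p) (hα : 0 < α) (hk : 0 < k) (ht : 0 ≤ t)
    (h : 0 < effRate p r α k x t) : t < r x := by
  by_contra! hrt
  rw [effRate_of_ge hα.ne' hrt, neg_pos] at h
  have hp0 := (hp.mem_unit x).1
  have hp1 : 0 ≤ 1 - p x := sub_nonneg.2 (hp.mem_unit x).2
  have := sub_nonneg.2 hrt
  exact h.not_ge (by positivity)

lemma lt_rate_of_effRate_nonneg (hp : FailureProb p) (hα : 0 < α) (hk : 0 < k) (ht : 0 ≤ t)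
    (hx : 0 < x) (h : 0 ≤ effRate p r α k x t) : t < r x := by
  by_contra! hrt
  rw [effRate_of_ge hα.ne' hrt, neg_nonneg] at h
  have hp0 := hp.pos hx
  have hp1 : 0 ≤ 1 - p x := sub_nonneg.2 (hp.mem_unit x).2
  have := sub_nonneg.2 hrt
  exact h.not_gt (by positivity)

lemma lt_one_of_effRate_nonneg (hp : FailureProb p) (hα : 0 < α) (hk : 0 < k) (ht : 0 ≤ t)
    (h : 0 ≤ effRate p r α k x t) : x < 1 := by
  by_contra! hx
  have hrt := lt_rate_of_effRate_nonneg hp hα hk ht (one_pos.trans_le hx) h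
  have hcost : 0 < k * (1 + t) ^ α := by positivity
  rw [effRate_of_le hrt.le, hp.eq_one x hx] at h
  linarith

lemma effRate_lt_effRate_of_nonneg (hp : FailureProb p) (hdec : StrictAntiOn r (Icc (0 : ℝ) 1))
    (hα : 0 < α) (hk : 0 < k) (ht : 0 ≤ t) {y : ℝ} (hx : 0 ≤ x) (hxy : x < y)
    (h : 0 ≤ effRate p r α k y t) : effRate p r α k y t < effRate p r α k x t := by
  have hy1 := lt_one_of_effRate_nonneg hp hα hk ht h
  have hty := lt_rate_of_effRate_nonneg hp hα hk ht (hx.trans_lt hxy) h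
  have hr_lt : r y < r x := hdec ⟨hx, (hxy.trans hy1).le⟩ ⟨hx.trans hxy.le, hy1.le⟩ hxy
  have hp_lt : p x < p y := hp.strictMonoOn ⟨hx, hxy.trans hy1⟩ ⟨hx.trans hxy.le, hy1⟩ hxy
  have hgain : (r y - t) ^ α * (1 - p y) ≤ (r x - t) ^ α * (1 - p x) :=
    mul_le_mul (rpow_le_rpow (by linarith) (by linarith) hα.le) (by linarith)
      (sub_nonneg.2 (hp.mem_unit y).2) (rpow_nonneg (by linarith) _)
  have hloss : k * (1 + t) ^ α * p x < k * (1 + t) ^ α * p y :=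
    mul_lt_mul_of_pos_left hp_lt (by positivity)
  rw [effRate_of_le hty.le, effRate_of_le (hty.trans hr_lt).le]
  linarith

lemma effRate_pos_of_le (hp : FailureProb p) (hdec : StrictAntiOn r (Icc (0 : ℝ) 1))
    (hα : 0 < α) (hk : 0 < k) (ht : 0 ≤ t) {y : ℝ} (hx : 0 ≤ x) (hxy : x ≤ y)
    (h : 0 < effRate p r α k y t) : 0 < effRate p r α k x t := by
  rcases hxy.eq_or_lt with rfl | hlt
  · exact h
  · exact h.trans (effRate_lt_effRate_of_nonneg hp hdec hα hk ht hx hlt h.le)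

lemma exists_gt_effRate_pos (hp : FailureProb p) (hr : ContinuousOn r (Icc (0 : ℝ) 1))
    (hα : 0 < α) (hk : 0 < k) (ht : 0 ≤ t) (hx : 0 ≤ x) (h : 0 < effRate p r α k x t) :
    ∃ z ∈ Ioo x 1, 0 < effRate p r α k z t := by
  have hx1 := lt_one_of_effRate_nonneg hp hα hk ht h.le
  have hcont : ContinuousWithinAt (fun z => effRate p r α k z t) (Ioo x 1) x :=
    (continuousOn_effRate hp hr hα x ⟨hx, hx1⟩).mono fun z hz => ⟨hx.trans hz.1.le, hz.2⟩
  have : (𝓝[Ioo x 1] x).NeBot := left_nhdsWithin_Ioo_neBot hx1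
  exact (eventually_mem_nhdsWithin.and (hcont.eventually_const_lt h)).exists

lemma hasDerivAt_effRate (hp : FailureProb p) (hr : DifferentiableOn ℝ r (Icc (0 : ℝ) 1))
    (hx : x ∈ Ioo (0 : ℝ) 1) (h : t < r x) :
    HasDerivAt (fun z => effRate p r α k z t)
      (deriv r x * α * (r x - t) ^ (α - 1) * (1 - p x) + (r x - t) ^ α * -deriv p x
        - k * (1 + t) ^ α * deriv p x) x := by
  have hp' : HasDerivAt p (deriv p x) x := (hp.differentiableAt hx).hasDerivAt
  have hr' : HasDerivAt r (deriv r x) x :=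
    (hr.differentiableAt (Icc_mem_nhds hx.1 hx.2)).hasDerivAt
  have hpow := (hr'.sub_const t).rpow_const (p := α) (Or.inl (sub_pos.2 h).ne')
  refine ((hpow.mul (hp'.const_sub 1)).sub (hp'.const_mul _)).congr_of_eventuallyEq ?_
  filter_upwards [hr'.continuousAt.eventually_const_lt h] with z hz using effRate_of_le hz.le

lemma hasDerivAt_effRateDx (hp : FailureProb p) (hr : DifferentiableOn ℝ r (Icc (0 : ℝ) 1))
    (hx : x ∈ Ioo (0 : ℝ) 1) (h : t < r x) :
    HasDerivAt (fun z => effRate p r α k z t) (effRateDx p r α k x t) x :=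
  (hasDerivAt_effRate hp hr hx h).differentiableAt.hasDerivAt

lemma effRateDx_neg (hp : FailureProb p) (hr : DifferentiableOn ℝ r (Icc (0 : ℝ) 1))
    (hdec : StrictAntiOn r (Icc (0 : ℝ) 1)) (hα : 0 < α) (hk : 0 < k) (ht : 0 ≤ t)
    (hx : x ∈ Ioo (0 : ℝ) 1) (h : t < r x) : effRateDx p r α k x t < 0 := by
  have hp1 : 0 ≤ 1 - p x := sub_nonneg.2 (hp.mem_unit x).2
  have hp' := hp.deriv_pos hx
  have hr' : 0 ≤ -deriv r x := by
    rw [← derivWithin_of_mem_nhds (Icc_mem_nhds hx.1 hx.2), neg_nonneg]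
    exact hdec.antitoneOn.derivWithin_nonpos
  have := sub_pos.2 h
  have hgain : 0 ≤ -deriv r x * α * (r x - t) ^ (α - 1) * (1 - p x) := by positivity
  have hloss : 0 < (r x - t) ^ α * deriv p x + k * (1 + t) ^ α * deriv p x := by positivity
  rw [effRateDx, (hasDerivAt_effRate hp hr hx h).deriv]
  linarith

lemma continuousAt_effRateDx_tax (hp : FailureProb p)
    (hr : DifferentiableOn ℝ r (Icc (0 : ℝ) 1)) (hα : 0 < α) (hx : x ∈ Ioo (0 : ℝ) 1)
    (h : t < r x) : ContinuousAt (fun s => effRateDx p r α k x s) t := by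
  have hgain (β : ℝ) : ContinuousAt (fun s => (r x - s) ^ β) t :=
    (continuousAt_const.sub continuousAt_id).rpow_const (Or.inl (sub_pos.2 h).ne')
  have hfail : ContinuousAt (fun s : ℝ => (1 + s) ^ α) t :=
    (continuousAt_const.add continuousAt_id).rpow_const (Or.inr hα.le)
  have hformula : ContinuousAt (fun s => deriv r x * α * (r x - s) ^ (α - 1) * (1 - p x)
      + (r x - s) ^ α * -deriv p x - k * (1 + s) ^ α * deriv p x) t := by
    have := hgain (α - 1)
    have := hgain α
    fun_prop
  refine hformula.congr ?_
  filter_upwards [eventually_lt_nhds h] with s hs using (hasDerivAt_effRate hp hr hx hs).deriv.symm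

end EffRate

/-! ### Log-concavity -/

section LogConcave

variable {p r : ℝ → ℝ} {α k x t : ℝ}

/-- The utilizations inside the unit interval at which a player's effective rate of return is
positive; for a strictly decreasing rate of return this is the paper's interval `(0, y^t_i)`. -/
def profitSet (p r : ℝ → ℝ) (α k t : ℝ) : Set ℝ :=
  {x ∈ Ioo (0 : ℝ) 1 | 0 < effRate p r α k x t}

lemma effRate_eq_mul (hpx : p x < 1) (h : t ≤ r x) :
    effRate p r α k x t = (1 - p x) *
      ((r x - t) ^ α + k * (1 + t) ^ α - k * (1 + t) ^ α / (1 - p x)) := by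
  have hv : 1 - p x ≠ 0 := (sub_pos.2 hpx).ne'
  rw [effRate_of_le h]
  field_simp
  ring

lemma concaveOn_one_sub_failureProb (hp : FailureProb p) :
    ConcaveOn ℝ (Ico (0 : ℝ) 1) fun x => 1 - p x :=
  (concaveOn_const 1 (convex_Ico 0 1)).sub hp.convexOn

lemma concaveOn_log_effRate (hp : FailureProb p) (hconc : ConcaveOn ℝ (Icc (0 : ℝ) 1) r)
    (hα : α ∈ Ioc (0 : ℝ) 1) (hk : 0 < k) (ht : 0 ≤ t) :
    ConcaveOn ℝ (profitSet p r α k t) fun x => log (effRate p r α k x t) := by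
  set s : Set ℝ := {x ∈ Ioo (0 : ℝ) 1 | t < r x}
  set c : ℝ := k * (1 + t) ^ α
  set φ : ℝ → ℝ := fun x => (r x - t) ^ α + c - c / (1 - p x)
  have hs : Convex ℝ s :=
    (hconc.subset Ioo_subset_Icc_self (convex_Ioo 0 1)).convex_gt t
  have hv_pos : ∀ x ∈ s, 0 < 1 - p x := fun x hx =>
    sub_pos.2 (hp.lt_one (Ioo_subset_Ico_self hx.1))
  have hf : ∀ x ∈ s, effRate p r α k x t = (1 - p x) * φ x := fun x hx =>
    effRate_eq_mul (sub_pos.1 (hv_pos x hx)) hx.2.le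
  have hu : ConcaveOn ℝ s fun x => (r x - t) ^ α :=
    concaveOn_comp_of_mapsTo (Real.concaveOn_rpow hα.1.le hα.2)
      (monotoneOn_rpow_Ici_of_exponent_nonneg hα.1.le)
      ((hconc.subset (fun x hx => Ioo_subset_Icc_self hx.1) hs).sub (convexOn_const t hs))
      fun x hx => (sub_pos.2 hx.2).le
  have hv : ConcaveOn ℝ s fun x => 1 - p x :=
    (concaveOn_one_sub_failureProb hp).subset (fun x hx => Ioo_subset_Ico_self hx.1) hs
  have hφ : ConcaveOn ℝ s φ := concaveOn_add_sub_div hu hv hv_pos (by positivity)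
  have hset : profitSet p r α k t = {x ∈ s | 0 < φ x} := by
    ext x
    constructor
    · rintro ⟨hx, hpos⟩
      have hxs : x ∈ s := ⟨hx, lt_rate_of_effRate_pos hp hα.1 hk ht hpos⟩
      exact ⟨hxs, (mul_pos_iff_of_pos_left (hv_pos x hxs)).1 (hf x hxs ▸ hpos)⟩
    · rintro ⟨hxs, hpos⟩
      exact ⟨hxs.1, hf x hxs ▸ mul_pos (hv_pos x hxs) hpos⟩
  have hconvex : Convex ℝ {x ∈ s | 0 < φ x} := hφ.convex_gt 0
  rw [hset]
  refine (concaveOn_log_mul (hv.subset (sep_subset _ _) hconvex)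
    (hφ.subset (sep_subset _ _) hconvex) (fun x hx => hv_pos x hx.1) fun x hx => hx.2).congr ?_
  exact fun x hx => congrArg log (hf x hx.1).symm

lemma antitoneOn_logDeriv_effRate (hp : FailureProb p) (hconc : ConcaveOn ℝ (Icc (0 : ℝ) 1) r)
    (hr : DifferentiableOn ℝ r (Icc (0 : ℝ) 1)) (hα : α ∈ Ioc (0 : ℝ) 1) (hk : 0 < k)
    (ht : 0 ≤ t) :
    AntitoneOn (logDeriv fun z => effRate p r α k z t) (profitSet p r α k t) := by
  have hdiff : ∀ x ∈ profitSet p r α k t, DifferentiableAt ℝ (fun z => effRate p r α k z t) x :=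
    fun x hx => (hasDerivAt_effRate hp hr hx.1
      (lt_rate_of_effRate_pos hp hα.1 hk ht hx.2)).differentiableAt
  refine ((concaveOn_log_effRate hp hconc hα hk ht).antitoneOn_deriv fun x hx =>
    (hdiff x hx).log hx.2.ne').congr fun x hx => ?_
  exact deriv_log_comp_eq_logDeriv (hdiff x hx) hx.2.ne'

end LogConcave

/-! ### First-order shares -/

section Share

variable {p r : ℝ → ℝ} {α k x t : ℝ}

/-- The investment that the first-order condition prescribes to a player at an equilibrium with
total investment `x`: `gFun` where the effective rate of return is positive, and `0` elsewhere. The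
cut-off is by a positive part, rather than at a threshold as in `gHat`, so that continuity in the
tax rate is inherited from `effRate` and `effRateDx`. -/
def share (p r : ℝ → ℝ) (α k x t : ℝ) : ℝ :=
  α * max (effRate p r α k x t) 0 / (-effRateDx p r α k x t)

lemma share_eq_zero (h : effRate p r α k x t ≤ 0) : share p r α k x t = 0 := by
  rw [share, max_eq_right h, mul_zero, zero_div]

lemma share_eq_div_neg_logDeriv (h : 0 < effRate p r α k x t) :
    share p r α k x t = α / -logDeriv (fun z => effRate p r α k z t) x := by
  rw [share, max_eq_left h.le, logDeriv_apply, ← neg_div, div_div_eq_mul_div]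
  rfl

lemma share_nonneg (hp : FailureProb p) (hr : DifferentiableOn ℝ r (Icc (0 : ℝ) 1))
    (hdec : StrictAntiOn r (Icc (0 : ℝ) 1)) (hα : 0 < α) (hk : 0 < k) (ht : 0 ≤ t)
    (hx : x ∈ Ioo (0 : ℝ) 1) : 0 ≤ share p r α k x t := by
  rcases le_or_gt (effRate p r α k x t) 0 with hf | hf
  · exact (share_eq_zero hf).ge
  · have hDx := effRateDx_neg hp hr hdec hα hk ht hx (lt_rate_of_effRate_pos hp hα hk ht hf)
    exact div_nonneg (mul_nonneg hα.le (le_max_right _ _)) (neg_pos.2 hDx).le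

lemma antitoneOn_share (hp : FailureProb p) (hconc : ConcaveOn ℝ (Icc (0 : ℝ) 1) r)
    (hr : DifferentiableOn ℝ r (Icc (0 : ℝ) 1)) (hdec : StrictAntiOn r (Icc (0 : ℝ) 1))
    (hα : α ∈ Ioc (0 : ℝ) 1) (hk : 0 < k) (ht : 0 ≤ t) :
    AntitoneOn (fun x => share p r α k x t) (Ioo (0 : ℝ) 1) := by
  intro x hx y hy hxy
  change share p r α k y t ≤ share p r α k x t
  rcases le_or_gt (effRate p r α k y t) 0 with hfy | hfy
  · exact (share_eq_zero hfy).trans_le (share_nonneg hp hr hdec hα.1 hk ht hx)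
  have hfx := effRate_pos_of_le hp hdec hα.1 hk ht hx.1.le hxy hfy
  have hlog_neg : logDeriv (fun z => effRate p r α k z t) x < 0 :=
    div_neg_of_neg_of_pos
      (effRateDx_neg hp hr hdec hα.1 hk ht hx (lt_rate_of_effRate_pos hp hα.1 hk ht hfx)) hfx
  rw [share_eq_div_neg_logDeriv hfy, share_eq_div_neg_logDeriv hfx]
  exact div_le_div_of_nonneg_left hα.1.le (neg_pos.2 hlog_neg)
    (neg_le_neg (antitoneOn_logDeriv_effRate hp hconc hr hα hk ht ⟨hx, hfx⟩ ⟨hy, hfy⟩ hxy))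

lemma continuousAt_share_tax (hp : FailureProb p) (hr : DifferentiableOn ℝ r (Icc (0 : ℝ) 1))
    (hdec : StrictAntiOn r (Icc (0 : ℝ) 1)) (hα : 0 < α) (hk : 0 < k) (ht : 0 ≤ t)
    (hx : x ∈ Ioo (0 : ℝ) 1) : ContinuousAt (fun s => share p r α k x s) t := by
  have hf : ContinuousAt (fun s => effRate p r α k x s) t :=
    (continuous_effRate_tax hα).continuousAt
  rcases lt_or_ge t (r x) with h | h
  · exact (continuousAt_const.mul (hf.max continuousAt_const)).div
      (continuousAt_effRateDx_tax hp hr hα hx h).neg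
      (neg_pos.2 (effRateDx_neg hp hr hdec hα hk ht hx h)).ne'
  · have hneg : effRate p r α k x t < 0 := lt_of_not_ge fun hf0 =>
      (lt_rate_of_effRate_nonneg hp hα hk ht hx.1 hf0).not_ge h
    refine (continuousAt_const (y := (0 : ℝ))).congr ?_
    filter_upwards [hf.eventually_lt_const hneg] with s hs using (share_eq_zero hs.le).symm

end Share

/-! ### Equilibria -/

section Equilibrium

variable {ι : Type*} [Fintype ι] {p r : ℝ → ℝ} {α k : ι → ℝ} {t : ℝ} {x : ι → ℝ}

lemma effRate_nonpos_of_tbar_le (hp : FailureProb p) (hdec : StrictAntiOn r (Icc (0 : ℝ) 1))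
    (hα : ∀ i, 0 < α i) (hk : ∀ i, 0 < k i) (ht : 0 ≤ t) (htbar : tbar p r α k ≤ t) {z : ℝ}
    (hz : z ∈ Icc (0 : ℝ) 1) (i : ι) : effRate p r (α i) (k i) z t ≤ 0 := by
  by_contra! hpos
  have hbdd : BddAbove {s : ℝ | 0 ≤ s ∧
      ∃ i : ι, ∃ y ∈ Icc (0 : ℝ) 1, 0 < effRate p r (α i) (k i) y s} := by
    refine ⟨r 0, ?_⟩
    rintro s ⟨hs, j, y, hy, hf⟩
    exact (lt_rate_of_effRate_pos hp (hα j) (hk j) hs hf).le.trans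
      (hdec.antitoneOn ⟨le_rfl, zero_le_one⟩ hy hy.1)
  have hpos_near : ∀ᶠ s in 𝓝[>] t, 0 < effRate p r (α i) (k i) z s :=
    ((continuous_effRate_tax (hα i)).continuousAt.eventually_const_lt hpos).filter_mono
      nhdsWithin_le_nhds
  obtain ⟨s, hts, hs⟩ := (eventually_mem_nhdsWithin.and hpos_near).exists
  exact (htbar.trans_lt hts).not_ge (le_csSup hbdd ⟨ht.trans (le_of_lt hts), i, z, hz, hs⟩)

namespace IsPNE

variable [DecidableEq ι]

lemma sum_nonneg (h : IsPNE p r α k t x) : 0 ≤ ∑ j, x j :=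
  Finset.sum_nonneg fun i _ => (h.1 i).1

lemma le_sum (h : IsPNE p r α k t x) (i : ι) : x i ≤ ∑ j, x j :=
  Finset.single_le_sum (fun j _ => (h.1 j).1) (Finset.mem_univ i)

lemma rpow_mul_effRate_le (h : IsPNE p r α k t x) (i : ι) {y : ℝ} (hy : y ∈ Icc (0 : ℝ) 1) :
    y ^ α i * effRate p r (α i) (k i) (y + (∑ j, x j - x i)) t ≤
      x i ^ α i * effRate p r (α i) (k i) (∑ j, x j) t := by
  have hdev := h.2 i y hy
  rwa [Finset.sum_erase_eq_sub (Finset.mem_univ i), add_sub_cancel] at hdev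

lemma pos_of_effRate_pos (h : IsPNE p r α k t x) (hp : FailureProb p)
    (hr : ContinuousOn r (Icc (0 : ℝ) 1)) (hα : ∀ i, 0 < α i) (hk : ∀ i, 0 < k i) (ht : 0 ≤ t)
    {i : ι} (hf : 0 < effRate p r (α i) (k i) (∑ j, x j) t) : 0 < x i := by
  refine (h.1 i).1.lt_of_ne' fun hxi => ?_
  obtain ⟨z, hz, hfz⟩ := exists_gt_effRate_pos hp hr (hα i) (hk i) ht h.sum_nonneg hf
  have hdev := h.rpow_mul_effRate_le i (y := z - ∑ j, x j)
    ⟨sub_nonneg.2 hz.1.le, by linarith [hz.2, h.sum_nonneg]⟩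
  rw [hxi, sub_zero, sub_add_cancel, zero_rpow (hα i).ne', zero_mul] at hdev
  exact hdev.not_gt (mul_pos (rpow_pos_of_pos (sub_pos.2 hz.1) _) hfz)

lemma effRate_pos_of_pos (h : IsPNE p r α k t x) (hp : FailureProb p)
    (hdec : StrictAntiOn r (Icc (0 : ℝ) 1)) (hα : ∀ i, 0 < α i) (hk : ∀ i, 0 < k i) (ht : 0 ≤ t)
    {i : ι} (hxi : 0 < x i) : 0 < effRate p r (α i) (k i) (∑ j, x j) t := by
  have hnonneg : 0 ≤ effRate p r (α i) (k i) (∑ j, x j) t := by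
    have hdev := h.rpow_mul_effRate_le i (y := 0) ⟨le_rfl, zero_le_one⟩
    rw [zero_rpow (hα i).ne', zero_mul] at hdev
    exact nonneg_of_mul_nonneg_right hdev (rpow_pos_of_pos hxi _)
  refine hnonneg.lt_of_ne' fun hzero => ?_
  -- With a zero return, halving the investment would make it strictly profitable.
  have hhalf := h.rpow_mul_effRate_le i (y := x i / 2) ⟨by linarith, by linarith [(h.1 i).2]⟩
  have hlt := effRate_lt_effRate_of_nonneg hp hdec (hα i) (hk i) ht
    (x := x i / 2 + (∑ j, x j - x i)) (by linarith [h.le_sum i]) (by linarith) hnonneg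
  rw [hzero] at hlt
  rw [hzero, mul_zero] at hhalf
  exact hhalf.not_gt (mul_pos (rpow_pos_of_pos (half_pos hxi) _) hlt)

lemma eq_zero_of_effRate_nonpos (h : IsPNE p r α k t x) (hp : FailureProb p)
    (hdec : StrictAntiOn r (Icc (0 : ℝ) 1)) (hα : ∀ i, 0 < α i) (hk : ∀ i, 0 < k i) (ht : 0 ≤ t)
    {i : ι} (hf : effRate p r (α i) (k i) (∑ j, x j) t ≤ 0) : x i = 0 :=
  (h.1 i).1.eq_of_not_lt' fun hxi => (h.effRate_pos_of_pos hp hdec hα hk ht hxi).not_ge hf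

lemma sum_lt_one (h : IsPNE p r α k t x) (hp : FailureProb p)
    (hdec : StrictAntiOn r (Icc (0 : ℝ) 1)) (hα : ∀ i, 0 < α i) (hk : ∀ i, 0 < k i)
    (ht : 0 ≤ t) : ∑ j, x j < 1 := by
  by_contra! hS
  obtain ⟨i, -, hxi⟩ := Finset.exists_lt_of_sum_lt (s := Finset.univ) (f := fun _ => 0) (g := x)
    (by simpa only [Finset.sum_const_zero] using one_pos.trans_le hS)
  have hf := h.effRate_pos_of_pos hp hdec hα hk ht hxi
  exact (lt_one_of_effRate_nonneg hp (hα i) (hk i) ht hf.le).not_ge hS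

lemma eq_share (h : IsPNE p r α k t x) (hp : FailureProb p)
    (hr : DifferentiableOn ℝ r (Icc (0 : ℝ) 1)) (hdec : StrictAntiOn r (Icc (0 : ℝ) 1))
    (hα : ∀ i, 0 < α i) (hk : ∀ i, 0 < k i) (ht : 0 ≤ t) (hS : 0 < ∑ j, x j) (i : ι) :
    x i = share p r (α i) (k i) (∑ j, x j) t := by
  rcases le_or_gt (effRate p r (α i) (k i) (∑ j, x j) t) 0 with hf | hf
  · rw [share_eq_zero hf, h.eq_zero_of_effRate_nonpos hp hdec hα hk ht hf]
  have hxi := h.pos_of_effRate_pos hp hr.continuousOn hα hk ht hf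
  have hS1 := h.sum_lt_one hp hdec hα hk ht
  have htS := lt_rate_of_effRate_pos hp (hα i) (hk i) ht hf
  have hderiv : HasDerivAt (fun y => effRate p r (α i) (k i) (y + (∑ j, x j - x i)) t)
      (effRateDx p r (α i) (k i) (∑ j, x j) t) (x i) := by
    have hDx : HasDerivAt (fun z => effRate p r (α i) (k i) z t)
        (effRateDx p r (α i) (k i) (∑ j, x j) t) (x i + (∑ j, x j - x i)) := by
      rw [add_sub_cancel]
      exact hasDerivAt_effRateDx hp hr ⟨hS, hS1⟩ htS
    exact hDx.comp_add_const (x i) _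
  have hmax : IsLocalMax
      (fun y => y ^ α i * effRate p r (α i) (k i) (y + (∑ j, x j - x i)) t) (x i) := by
    filter_upwards [Icc_mem_nhds hxi ((h.le_sum i).trans_lt hS1)] with y hy
    simpa only [add_sub_cancel] using h.rpow_mul_effRate_le i hy
  have hfoc := mul_neg_deriv_eq_of_isLocalMax_rpow_mul hxi hderiv hmax
  rw [add_sub_cancel] at hfoc
  have hDx := effRateDx_neg hp hr hdec (hα i) (hk i) ht ⟨hS, hS1⟩ htS
  rw [share, max_eq_left hf.le, eq_div_iff (neg_pos.2 hDx).ne', hfoc]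

lemma le_share (h : IsPNE p r α k t x) (hp : FailureProb p)
    (hconc : ConcaveOn ℝ (Icc (0 : ℝ) 1) r) (hr : DifferentiableOn ℝ r (Icc (0 : ℝ) 1))
    (hdec : StrictAntiOn r (Icc (0 : ℝ) 1)) (hα : ∀ i, α i ∈ Ioc (0 : ℝ) 1) (hk : ∀ i, 0 < k i)
    (ht : 0 ≤ t) {y : ℝ} (hy : y ∈ Ioo (0 : ℝ) 1) (hyS : y ≤ ∑ j, x j) (i : ι) :
    x i ≤ share p r (α i) (k i) y t := by
  have hα_pos : ∀ i, 0 < α i := fun i => (hα i).1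
  have hS := hy.1.trans_le hyS
  exact (h.eq_share hp hr hdec hα_pos hk ht hS i).trans_le
    (antitoneOn_share hp hconc hr hdec (hα i) (hk i) ht hy
      ⟨hS, h.sum_lt_one hp hdec hα_pos hk ht⟩ hyS)

lemma share_le (h : IsPNE p r α k t x) (hp : FailureProb p)
    (hconc : ConcaveOn ℝ (Icc (0 : ℝ) 1) r) (hr : DifferentiableOn ℝ r (Icc (0 : ℝ) 1))
    (hdec : StrictAntiOn r (Icc (0 : ℝ) 1)) (hα : ∀ i, α i ∈ Ioc (0 : ℝ) 1) (hk : ∀ i, 0 < k i)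
    (ht : 0 ≤ t) {y : ℝ} (hy : y ∈ Ioo (0 : ℝ) 1) (hSy : ∑ j, x j ≤ y) (i : ι) :
    share p r (α i) (k i) y t ≤ x i := by
  have hα_pos : ∀ i, 0 < α i := fun i => (hα i).1
  rcases le_or_gt (effRate p r (α i) (k i) y t) 0 with hf | hf
  · exact (share_eq_zero hf).trans_le (h.1 i).1
  have hfS := effRate_pos_of_le hp hdec (hα_pos i) (hk i) ht h.sum_nonneg hSy hf
  have hxi := h.pos_of_effRate_pos hp hr.continuousOn hα_pos hk ht hfS
  have hS := hxi.trans_le (h.le_sum i)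
  exact (antitoneOn_share hp hconc hr hdec (hα i) (hk i) ht ⟨hS, hSy.trans_lt hy.2⟩ hy hSy).trans
    (h.eq_share hp hr hdec hα_pos hk ht hS i).ge

lemma sum_eq_zero_of_tbar_le (h : IsPNE p r α k t x) (hp : FailureProb p)
    (hdec : StrictAntiOn r (Icc (0 : ℝ) 1)) (hα : ∀ i, 0 < α i) (hk : ∀ i, 0 < k i) (ht : 0 ≤ t)
    (htbar : tbar p r α k ≤ t) : ∑ j, x j = 0 :=
  Finset.sum_eq_zero fun i _ => h.eq_zero_of_effRate_nonpos hp hdec hα hk ht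
    (effRate_nonpos_of_tbar_le hp hdec hα hk ht htbar
      ⟨h.sum_nonneg, (h.sum_lt_one hp hdec hα hk ht).le⟩ i)

end IsPNE

end Equilibrium

theorem statement15_general {ι : Type*} [Fintype ι] [DecidableEq ι] {p r : ℝ → ℝ} {α k : ι → ℝ}
    (hp : FailureProb p) (hconc : ConcaveOn ℝ (Icc (0 : ℝ) 1) r)
    (hr : DifferentiableOn ℝ r (Icc (0 : ℝ) 1)) (hdec : StrictAntiOn r (Icc (0 : ℝ) 1))
    (hα : ∀ i, α i ∈ Ioc (0 : ℝ) 1) (hk : ∀ i, 0 < k i) {T : Set ℝ} (hT : ∀ t ∈ T, 0 ≤ t)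
    {X : ℝ → ℝ} (hX : ∀ t ∈ T, ∃ x : ι → ℝ, IsPNE p r α k t x ∧ ∑ i, x i = X t) :
    ContinuousOn X T ∧ ∀ t ∈ T, tbar p r α k ≤ t → X t = 0 := by
  have hα_pos : ∀ i, 0 < α i := fun i => (hα i).1
  refine ⟨continuousOn_of_crossing (a := 0) (b := 1)
    (F := fun t y => ∑ i, share p r (α i) (k i) y t) (fun t ht => ?_) (fun y hy t ht => ?_)
    (fun t ht y hy hyX => ?_) (fun t ht y hy hXy => ?_), fun t ht htbar => ?_⟩
  · obtain ⟨x, hx, hxX⟩ := hX t ht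
    exact hxX ▸ ⟨hx.sum_nonneg, hx.sum_lt_one hp hdec hα_pos hk (hT t ht)⟩
  · exact (tendsto_finsetSum _ fun i _ => continuousAt_share_tax hp hr hdec (hα_pos i) (hk i)
      (hT t ht) hy).mono_left nhdsWithin_le_nhds
  · obtain ⟨x, hx, hxX⟩ := hX t ht
    rw [← hxX] at hyX ⊢
    exact Finset.sum_le_sum fun i _ => hx.le_share hp hconc hr hdec hα hk (hT t ht) hy hyX i
  · obtain ⟨x, hx, hxX⟩ := hX t ht
    rw [← hxX] at hXy ⊢
    exact Finset.sum_le_sum fun i _ => hx.share_le hp hconc hr hdec hα hk (hT t ht) hy hXy i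
  · obtain ⟨x, hx, hxX⟩ := hX t ht
    exact hxX ▸ hx.sum_eq_zero_of_tbar_le hp hdec hα_pos hk (hT t ht) htbar

/-- for a strictly decreasing rate of return, the utilization map
`t ↦ x^t_NE` is continuous on the whole closed interval `[0, t̄]`, with
`x_NE(t̄) = 0`. -/
theorem statement15 {ι : Type*} [Fintype ι] [DecidableEq ι] [Nonempty ι]
    (p r : ℝ → ℝ) (α k : ι → ℝ)
    (hp : FailureProb p) (hr : RateOfReturn r)
    (hdec : StrictAntiOn r (Icc (0:ℝ) 1))
    (hα : ∀ i, α i ∈ Ioc (0:ℝ) 1) (hk : ∀ i, 0 < k i)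
    (htbar : 0 < tbar p r α k)
    (X : ℝ → ℝ)
    (hX : ∀ t ∈ Icc (0:ℝ) (tbar p r α k),
      ∃ x : ι → ℝ, IsPNE p r α k t x ∧ ∑ i, x i = X t) :
    ContinuousOn X (Icc (0:ℝ) (tbar p r α k)) ∧ X (tbar p r α k) = 0 := by
  obtain ⟨hcont, hzero⟩ := statement15_general hp hr.concaveOn
    (hr.contDiffOn.differentiableOn one_ne_zero) hdec hα hk (fun t ht => ht.1) hX
  exact ⟨hcont, hzero _ ⟨htbar.le, le_rfl⟩ le_rfl⟩
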